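/- For every k ≥ 1, the ℚ-algebra homomorphism ℚ[x₁, …, x_k] → Λ/E_{>k} sending x_i to the class of the power sum p_i is an isomorphism (bijective), where E_{>k} ⊆ Λ is the ideal generated by { e_m : m > k }. -/

import Mathlib

/-!
Newton's recursion can be solved for `pₙ` in terms of `e₁, …, eₙ`, so an algebra homomorphism
out of `Λ` may be prescribed by arbitrary values on the `eₙ`, `n ≥ 1`
(`exists_algHom_eSym`), and its values on `p₁, …, p_k` depend only on those on `e₁, …, e_k`
(`algHom_pSym_eq`).

Injectivity: let `φ₀ : Λ → ℚ[x₁, …, x_k]` send `p_i` to `x_i` for `i ≤ k` and to `0` otherwise.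
The homomorphism `φ` with `φ(eₙ) = φ₀(eₙ)` for `n ≤ k` and `φ(eₙ) = 0` for `n > k` kills `E_{>k}`
and agrees with `φ₀` on `p₁, …, p_k`; hence it induces a left inverse of `ι_k`.

Surjectivity: modulo `E_{>k}` the recursion expresses `pₙ`, for `n > k`, through
`p_i` and `e_i` with `i < n`, so by strong induction all classes of `pₙ` and `eₙ` lie in the range.
-/

noncomputable section

/-- The ring of symmetric functions, modelled as the polynomial ring `ℚ[p₁, p₂, …]`
in countably many variables indexed by positive integers (the power sums). -/
abbrev SymmFn : Type := MvPolynomial ℕ+ ℚ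

/-- The power sum `pₙ` (for `n ≥ 1`; junk value `0` for `n = 0`). -/
def pSym (n : ℕ) : SymmFn :=
  if h : 0 < n then MvPolynomial.X (⟨n, h⟩ : ℕ+) else 0

/-- The elementary symmetric functions, defined by `e₀ = 1` and Newton's recursion
`n·eₙ = ∑_{i=1}^{n} (−1)^{i−1} pᵢ e_{n−i}`. -/
def eSym : ℕ → SymmFn
  | 0 => 1
  | n + 1 =>
      ((n + 1 : ℚ))⁻¹ •
        ∑ j ∈ Finset.range (n + 1), ((-1 : ℚ) ^ j) • (pSym (j + 1) * eSym (n - j))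
  termination_by n => n
  decreasing_by exact Nat.lt_succ_of_le (Nat.sub_le _ _)

/-- `∑_{d | n} d·a_d` as a rational number. -/
def divSum (a : ℕ →₀ ℕ) (n : ℕ) : ℚ :=
  ((∑ d ∈ n.divisors, d * a d : ℕ) : ℚ)

/-- `uₙ = pₙ − ∑_{d | n} d·a_d`. -/
def uSym (a : ℕ →₀ ℕ) (n : ℕ) : SymmFn :=
  pSym n - MvPolynomial.C (divSum a n)

/-- The ideal `E_{>k}` of `Λ` generated by the `e_m` with `m > k`. -/
def Egt (k : ℕ) : Ideal SymmFn :=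
  Ideal.span {x : SymmFn | ∃ m : ℕ, k < m ∧ x = eSym m}

/-- The ideal `U` of `Λ` generated by the `uₙ`, `n ≥ 1`. -/
def Uideal (a : ℕ →₀ ℕ) : Ideal SymmFn :=
  Ideal.span {x : SymmFn | ∃ n : ℕ, 0 < n ∧ x = uSym a n}

/-- The `ℚ`-algebra homomorphism `ι_k : ℚ[x₁, …, x_k] → Λ/E_{>k}` sending `x_i` to the
class of the power sum `p_i`. -/
def iotaK (k : ℕ) : MvPolynomial (Fin k) ℚ →ₐ[ℚ] SymmFn ⧸ Egt k :=
  MvPolynomial.aeval fun i : Fin k => Ideal.Quotient.mk (Egt k) (pSym ((i : ℕ) + 1))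

theorem pSym_zero : pSym 0 = 0 := by simp [pSym]

theorem pSym_pnat (n : ℕ+) : pSym n = MvPolynomial.X n := dif_pos n.pos

theorem pSym_succPNat (n : ℕ) : pSym (n + 1) = MvPolynomial.X n.succPNat :=
  pSym_pnat n.succPNat

theorem eSym_zero : eSym 0 = 1 := by rw [eSym]

/-- Newton's recursion with the summand of the top power sum split off. -/
theorem newton (n : ℕ) :
    ((n + 1 : ℚ)) • eSym (n + 1) =
      ∑ j ∈ Finset.range n, ((-1 : ℚ) ^ j) • (pSym (j + 1) * eSym (n - j))
        + ((-1 : ℚ) ^ n) • pSym (n + 1) := by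
  have h : (n + 1 : ℚ) ≠ 0 := by positivity
  rw [eSym, smul_smul, mul_inv_cancel₀ h, one_smul, Finset.sum_range_succ]
  simp [eSym_zero]

/-- Newton's recursion solved for the top power sum. -/
theorem pSym_succ (n : ℕ) :
    pSym (n + 1) = ((-1 : ℚ) ^ n) • (((n + 1 : ℚ)) • eSym (n + 1) -
      ∑ j ∈ Finset.range n, ((-1 : ℚ) ^ j) • (pSym (j + 1) * eSym (n - j))) := by
  rw [newton, add_sub_cancel_left, smul_smul, ← mul_pow]
  simp

section
variable {R : Type*} [CommRing R] [Algebra ℚ R]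

/-- The power sums attached to a sequence `G` of prescribed elementary symmetric functions:
`powerOf G n` is the `(n+1)`-st power sum. -/
def powerOf (G : ℕ → R) : ℕ → R
  | n => ((-1 : ℚ) ^ n) • (((n + 1 : ℚ)) • G (n + 1) -
      ∑ j : Fin n, ((-1 : ℚ) ^ (j : ℕ)) • (powerOf G j * G (n - j)))
  termination_by n => n
  decreasing_by exact j.2

/-- `Λ` is free on the `eₙ`, `n ≥ 1` (existence part). -/
theorem exists_algHom_eSym (G : ℕ → R) (h0 : G 0 = 1) :
    ∃ φ : SymmFn →ₐ[ℚ] R, ∀ n, φ (eSym n) = G n := by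
  refine ⟨MvPolynomial.aeval fun n : ℕ+ => powerOf G (n - 1), fun n => ?_⟩
  set φ : SymmFn →ₐ[ℚ] R := MvPolynomial.aeval fun n : ℕ+ => powerOf G (n - 1) with hφ
  have hp : ∀ n, φ (pSym (n + 1)) = powerOf G n := by
    intro n
    simp [hφ, pSym_succPNat]
  induction n using Nat.strong_induction_on with
  | _ n ih =>
    cases n with
    | zero => rw [eSym_zero, map_one, h0]
    | succ n =>
      have h : (n + 1 : ℚ) ≠ 0 := by positivity
      have e := congrArg φ (newton n)
      have hs : ∑ j ∈ Finset.range n, ((-1 : ℚ) ^ j) • (φ (pSym (j + 1)) * φ (eSym (n - j))) =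
          ∑ j : Fin n, ((-1 : ℚ) ^ (j : ℕ)) • (powerOf G j * G (n - j)) := by
        rw [Finset.sum_range]
        refine Finset.sum_congr rfl fun j _ => ?_
        rw [hp, ih _ (by omega)]
      simp only [map_smul, map_add, map_sum, map_mul] at e
      rw [hs, hp, powerOf, smul_smul, ← mul_pow] at e
      simp only [mul_neg, mul_one, neg_neg, one_pow, one_smul, add_sub_cancel] at e
      exact smul_right_injective R h e

/-- The value on `pₙ` only depends on the values on `e₁, …, eₙ`. -/
theorem algHom_pSym_eq (φ ψ : SymmFn →ₐ[ℚ] R) (k : ℕ)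
    (h : ∀ n ≤ k, φ (eSym n) = ψ (eSym n)) (n : ℕ) (hn : n ≤ k) :
    φ (pSym n) = ψ (pSym n) := by
  induction n using Nat.strong_induction_on with
  | _ n ih =>
    cases n with
    | zero => simp [pSym_zero]
    | succ n =>
      rw [pSym_succ]
      simp only [map_smul, map_sub, map_sum, map_mul]
      rw [h _ hn]
      congr 2
      refine Finset.sum_congr rfl fun j hj => ?_
      have := Finset.mem_range.1 hj
      rw [ih _ (by omega) (by omega), h _ (by omega)]

end

theorem iotaK_injective (k : ℕ) : Function.Injective (iotaK k) := by
  let φ₀ : SymmFn →ₐ[ℚ] MvPolynomial (Fin k) ℚ := MvPolynomial.aeval fun n : ℕ+ =>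
    if h : (n : ℕ) - 1 < k then MvPolynomial.X ⟨n - 1, h⟩ else 0
  obtain ⟨φ, hφ⟩ := exists_algHom_eSym (fun n => if n ≤ k then φ₀ (eSym n) else 0)
    (by simp [eSym_zero])
  have hker : ∀ x ∈ Egt k, φ x = 0 := by
    intro x hx
    have : Egt k ≤ RingHom.ker φ := by
      refine Ideal.span_le.2 ?_
      rintro _ ⟨m, hm, rfl⟩
      simp [RingHom.mem_ker, hφ, hm]
    exact this hx
  have hp : ∀ i : Fin k, φ (pSym (i + 1)) = MvPolynomial.X i := by
    intro i
    rw [algHom_pSym_eq φ φ₀ k (fun n hn => by simp [hφ, hn]) (i + 1) (by omega)]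
    simp only [φ₀, pSym_succPNat, MvPolynomial.aeval_X]
    simp
  have hc : (Ideal.Quotient.liftₐ (Egt k) φ hker).comp (iotaK k) = AlgHom.id ℚ _ := by
    ext i : 1
    simp only [AlgHom.comp_apply, iotaK, MvPolynomial.aeval_X, AlgHom.id_apply]
    exact hp i
  exact Function.LeftInverse.injective (g := Ideal.Quotient.liftₐ (Egt k) φ hker)
    fun x => DFunLike.congr_fun hc x

theorem mk_mem_range (k n : ℕ) :
    Ideal.Quotient.mkₐ ℚ (Egt k) (pSym n) ∈ (iotaK k).range ∧
      Ideal.Quotient.mkₐ ℚ (Egt k) (eSym n) ∈ (iotaK k).range := by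
  induction n using Nat.strong_induction_on with
  | _ n ih =>
    cases n with
    | zero => simp only [pSym_zero, eSym_zero, map_zero, map_one]; exact ⟨zero_mem _, one_mem _⟩
    | succ n =>
      have hs : ∑ j ∈ Finset.range n, ((-1 : ℚ) ^ j) •
          (Ideal.Quotient.mkₐ ℚ (Egt k) (pSym (j + 1)) *
            Ideal.Quotient.mkₐ ℚ (Egt k) (eSym (n - j))) ∈ (iotaK k).range := by
        refine sum_mem fun j hj => Subalgebra.smul_mem _ (mul_mem ?_ ?_) _
        · exact (ih _ (by have := Finset.mem_range.1 hj; omega)).1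
        · exact (ih _ (by omega)).2
      by_cases hn : n < k
      · have hp : Ideal.Quotient.mkₐ ℚ (Egt k) (pSym (n + 1)) ∈ (iotaK k).range :=
          ⟨MvPolynomial.X ⟨n, hn⟩, by simp [iotaK]⟩
        refine ⟨hp, ?_⟩
        have h : (n + 1 : ℚ) ≠ 0 := by positivity
        rw [← inv_smul_smul₀ h (eSym (n + 1)), newton]
        simp only [map_smul, map_add, map_sum, map_mul]
        exact Subalgebra.smul_mem _ (add_mem hs (Subalgebra.smul_mem _ hp _)) _
      · have he : Ideal.Quotient.mkₐ ℚ (Egt k) (eSym (n + 1)) = 0 :=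
          Ideal.Quotient.eq_zero_iff_mem.2 (Ideal.subset_span ⟨n + 1, by omega, rfl⟩)
        refine ⟨?_, he ▸ zero_mem _⟩
        rw [pSym_succ]
        simp only [map_smul, map_sub, map_sum, map_mul, he, smul_zero, zero_sub]
        exact Subalgebra.smul_mem _ (neg_mem hs) _

theorem iotaK_surjective (k : ℕ) : Function.Surjective (iotaK k) := by
  intro y
  obtain ⟨x, rfl⟩ := Ideal.Quotient.mkₐ_surjective ℚ (Egt k) y
  change Ideal.Quotient.mkₐ ℚ (Egt k) x ∈ (iotaK k).range
  induction x using MvPolynomial.induction_on with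
  | C a => exact Subalgebra.algebraMap_mem (iotaK k).range a
  | add p q hp hq => rw [map_add]; exact add_mem hp hq
  | mul_X p n hp =>
    rw [map_mul, ← pSym_pnat]
    exact mul_mem hp (mk_mem_range k n).1

/-- For every `k ≥ 1`, the `ℚ`-algebra homomorphism
`ℚ[x₁, …, x_k] → Λ/E_{>k}`, `x_i ↦ [p_i]`, is an isomorphism (bijective). -/
theorem iotaK_bijective (k : ℕ) (hk : 1 ≤ k) :
    Function.Bijective (iotaK k) :=
  ⟨iotaK_injective k, iotaK_surjective k⟩

end
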